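/- Fix a prime ℓ, positive integers e, r, n with r | e. Let I_d = (Z/eZ) × {(d,j) : 0 ≤ j < ℓ^d} with Z/rZ acting by translation on the first coordinate, and I = ⋃_{d≥0} I_d. Let L be the set of e-tuples of partitions of total size n, with Z/rZ acting by cyclically shifting indices (through the embedding Z/rZ → Z/eZ), and let W be the set of functions w : I → {ℓ-core partitions} with Σ_{(i,d,j)} ℓ^d |w(i,d,j)| = n, with Z/rZ acting via i'·w(i,d,j) = w(i+i',d,j). Then W and L are isomorphic as Z/rZ-sets. -/

import Mathlib

/-- The hook length of the cell `(i, j)` of a Young diagram. -/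
def hookLength (Y : YoungDiagram) (i j : ℕ) : ℕ :=
  Y.rowLen i + Y.colLen j - i - j - 1

/-- A Young diagram (partition) is an `ℓ`-core if it has no hook of length `ℓ`. -/
def IsLCore (ℓ : ℕ) (Y : YoungDiagram) : Prop :=
  ∀ c ∈ Y.cells, hookLength Y c.1 c.2 ≠ ℓ

/-- The index set `I = ⋃_{d ≥ 0} I_d` where `I_d = (ℤ/e) × {(d, j) ∣ 0 ≤ j < ℓ^d}`. -/
abbrev WIndex (ℓ e : ℕ) : Type := ZMod e × ((d : ℕ) × Fin (ℓ ^ d))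

/-- The embedding `ℤ/r → ℤ/e` (for `r ∣ e`), sending `k` to `k·(e/r)`. -/
def embed (e r : ℕ) (k : ZMod r) : ZMod e := ((k.val * (e / r) : ℕ) : ZMod e)

/-- The set `L` of `e`-tuples of partitions of total size `n`. -/
def Lset (e n : ℕ) : Set (ZMod e → YoungDiagram) :=
  {lam | ∑ᶠ i, (lam i).card = n}

/-- The set `W` of functions `w : I → {ℓ-cores}` with `∑ ℓ^d |w(i,d,j)| = n`. -/
def Wset (ℓ e n : ℕ) : Set (WIndex ℓ e → YoungDiagram) :=
  {w | (∀ x, IsLCore ℓ (w x)) ∧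
    (Function.support fun x => (w x).card).Finite ∧
    ∑ᶠ x : WIndex ℓ e, ℓ ^ x.2.1 * (w x).card = n}

/-- The shift action of `k ∈ ℤ/r` on `e`-tuples of partitions. -/
def shiftL (e r : ℕ) (k : ZMod r) (lam : ZMod e → YoungDiagram) :
    ZMod e → YoungDiagram :=
  fun i => lam (i + embed e r k)

/-- The shift action of `k ∈ ℤ/r` on functions `I → {partitions}`. -/
def shiftW (ℓ e r : ℕ) (k : ZMod r) (w : WIndex ℓ e → YoungDiagram) :
    WIndex ℓ e → YoungDiagram :=
  fun x => w (x.1 + embed e r k, x.2)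


namespace LC
open Finset

/-- Young diagram from an antitone, eventually zero function. -/
def ofFun (f : ℕ → ℕ) (hf : Antitone f) (N : ℕ) (hN : f N = 0) : YoungDiagram where
  cells := (range N ×ˢ range (f 0)).filter (fun c => c.2 < f c.1)
  isLowerSet := by
    rintro ⟨a, b⟩ ⟨c, d⟩ ⟨h1, h2⟩ h
    simp only [coe_filter, mem_product, mem_range, Set.mem_ofPred_eq] at h ⊢
    simp only at h1 h2
    have := hf h1
    refine ⟨⟨by omega, by omega⟩, by omega⟩

theorem ofFun_rowLen (f : ℕ → ℕ) (hf : Antitone f) (N : ℕ) (hN : f N = 0) (i : ℕ) :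
    (ofFun f hf N hN).rowLen i = f i := by
  have key : ∀ j, j < (ofFun f hf N hN).rowLen i ↔ j < f i := by
    intro j
    rw [← YoungDiagram.mem_iff_lt_rowLen, ← YoungDiagram.mem_cells]
    simp only [ofFun, mem_filter, mem_product, mem_range]
    constructor
    · exact fun h => h.2
    · intro h
      have h0 := hf (Nat.zero_le i)
      refine ⟨⟨?_, by omega⟩, h⟩
      by_contra hc
      have := hf (not_lt.1 hc)
      omega
  have h1 := key (f i)
  have h2 := key ((ofFun f hf N hN).rowLen i)
  omega

theorem ext_rowLen {Y Z : YoungDiagram} (h : ∀ i, Y.rowLen i = Z.rowLen i) : Y = Z := by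
  apply YoungDiagram.ext
  ext ⟨i, j⟩
  rw [YoungDiagram.mem_cells, YoungDiagram.mem_cells, YoungDiagram.mem_iff_lt_rowLen,
    YoungDiagram.mem_iff_lt_rowLen, h]

theorem lt_row_iff_lt_col (Y : YoungDiagram) (i j : ℕ) : j < Y.rowLen i ↔ i < Y.colLen j := by
  rw [← YoungDiagram.mem_iff_lt_rowLen, YoungDiagram.mem_iff_lt_colLen]

theorem rowLen_eq_zero (Y : YoungDiagram) (i : ℕ) (h : Y.colLen 0 ≤ i) : Y.rowLen i = 0 := by
  have := lt_row_iff_lt_col Y i 0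
  omega

theorem card_eq_sum (Y : YoungDiagram) (N : ℕ) (h : Y.colLen 0 ≤ N) :
    Y.card = ∑ i ∈ range N, Y.rowLen i := by
  have : Y.cells = (range N).biUnion (fun i => Y.row i) := by
    ext ⟨i, j⟩
    simp only [mem_biUnion, mem_range, YoungDiagram.mem_row_iff, YoungDiagram.mem_cells]
    constructor
    · intro hh
      refine ⟨i, ?_, hh, rfl⟩
      have h1 := YoungDiagram.mem_iff_lt_rowLen.1 hh
      by_contra hc
      have := rowLen_eq_zero Y i (by omega)
      omega
    · rintro ⟨a, -, h, -⟩
      exact h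
  rw [YoungDiagram.card, this, card_biUnion]
  · simp [YoungDiagram.rowLen_eq_card]
  · intro a _ b _ hab
    rw [Function.onFun, Finset.disjoint_left]
    rintro ⟨x, y⟩ h1 h2
    rw [YoungDiagram.mem_row_iff] at h1 h2
    exact hab (h1.2.symm.trans h2.2)

/-- `i`-th bead. -/
def bead (c : ℤ) (Y : YoungDiagram) (i : ℕ) : ℤ := c + Y.rowLen i - i - 1

/-- bead set -/
def maya (c : ℤ) (Y : YoungDiagram) : Set ℤ := Set.range (bead c Y)

def IsMaya (S : Set ℤ) : Prop := ∃ N : ℤ, (∀ s, s < -N → s ∈ S) ∧ (∀ s, N ≤ s → s ∉ S)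

theorem bead_anti (c : ℤ) (Y : YoungDiagram) : StrictAnti (bead c Y) := by
  intro a b h
  have := Y.rowLen_anti a b h.le
  unfold bead
  omega

theorem mem_maya_low (c : ℤ) (Y : YoungDiagram) (s : ℤ) (h : s < c - Y.colLen 0) :
    s ∈ maya c Y := by
  refine ⟨(c - 1 - s).toNat, ?_⟩
  unfold bead
  rw [rowLen_eq_zero Y _ (by omega)]
  omega

theorem isMaya_maya (c : ℤ) (Y : YoungDiagram) : IsMaya (maya c Y) := by
  refine ⟨|c| + Y.colLen 0 + Y.rowLen 0 + 1, ?_, ?_⟩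
  · intro s hs
    apply mem_maya_low
    have := neg_abs_le c
    omega
  · rintro s hs ⟨i, rfl⟩
    have := Y.rowLen_anti 0 i (Nat.zero_le i)
    have := le_abs_self c
    unfold bead at hs
    omega

theorem maya_inj {c c' : ℤ} {Y Y' : YoungDiagram} (h : maya c Y = maya c' Y') :
    c = c' ∧ Y = Y' := by
  have hb : bead c Y = bead c' Y' := by
    have h1 : StrictMono (fun i => OrderDual.toDual (bead c Y i)) := (bead_anti c Y)
    have h2 : StrictMono (fun i => OrderDual.toDual (bead c' Y' i)) := (bead_anti c' Y')
    have := (StrictMono.range_inj h1 h2).1 h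
    exact this
  have hc : c = c' := by
    have := congrFun hb (Y.colLen 0 + Y'.colLen 0)
    unfold bead at this
    rw [rowLen_eq_zero Y _ (by omega), rowLen_eq_zero Y' _ (by omega)] at this
    omega
  refine ⟨hc, ext_rowLen fun i => ?_⟩
  have := congrFun hb i
  unfold bead at this
  omega

theorem maya_surj (S : Set ℤ) (hS : IsMaya S) : ∃ c Y, maya c Y = S := by
  classical
  obtain ⟨M, hlow, hhigh⟩ := hS
  let p : ℕ → Prop := fun k => M - k ∈ S
  let K : ℕ := (2 * M + 1).toNat
  have hK : ∀ k, K ≤ k → p k := by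
    intro k hk
    apply hlow
    omega
  have hinf : (Set.ofPred p).Infinite :=
    Set.infinite_of_not_bddAbove (by
      rintro ⟨b, hb⟩
      have := hb (show b + K + 1 ∈ Set.ofPred p from hK _ (by omega))
      omega)
  have hmono : StrictMono (Nat.nth p) := Nat.nth_strictMono hinf
  have hcount : ∀ t, Nat.count p (K + t) = Nat.count p K + t := by
    intro t
    induction t with
    | zero => rfl
    | succ t ih =>
      rw [← add_assoc, Nat.count_succ, ih, if_pos (hK _ (by omega))]
      omega
  have hnth : ∀ t, Nat.nth p (Nat.count p K + t) = K + t := by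
    intro t
    rw [← hcount, Nat.nth_count (hK _ (by omega))]
  let B := Nat.count p K
  have hdm : ∀ i j, i ≤ j → Nat.nth p i + (j - i) ≤ Nat.nth p j := by
    intro i j hij
    have := hmono.add_le_nat (j - i) i
    have e : j - i + i = j := by omega
    rw [e] at this
    omega
  have hle : ∀ i, Nat.nth p i + B ≤ K + i := by
    intro i
    have h1 := hdm i (B + i) (by omega)
    have h2 := hnth i
    change Nat.nth p (B + i) = K + i at h2
    omega
  have h0 := hnth 0
  change Nat.nth p (B + 0) = K + 0 at h0
  let f : ℕ → ℕ := fun i => K + i - B - Nat.nth p i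
  have hf : Antitone f := by
    intro i j hij
    have h1 := hdm i j hij
    have h2 := hle i
    have h3 := hle j
    change K + j - B - Nat.nth p j ≤ K + i - B - Nat.nth p i
    omega
  have hfB : f B = 0 := by
    change K + B - B - Nat.nth p B = 0
    simp only [add_zero] at h0
    omega
  refine ⟨M + 1 - K + B, ofFun f hf B hfB, ?_⟩
  have hb : ∀ i, bead (M + 1 - K + B) (ofFun f hf B hfB) i = M - Nat.nth p i := by
    intro i
    unfold bead
    rw [ofFun_rowLen]
    have h2 := hle i
    change M + 1 - (K:ℤ) + B + ((K + i - B - Nat.nth p i : ℕ) : ℤ) - i - 1 = _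
    omega
  ext s
  constructor
  · rintro ⟨i, rfl⟩
    rw [hb]
    exact Nat.nth_mem_of_infinite hinf i
  · intro hs
    have hsM : s < M := by
      by_contra hc
      exact hhigh s (not_lt.1 hc) hs
    have hp : p (M - s).toNat := by
      change M - ((M - s).toNat : ℤ) ∈ S
      have : M - ((M - s).toNat : ℤ) = s := by omega
      rwa [this]
    refine ⟨Nat.count p (M - s).toNat, ?_⟩
    rw [hb, Nat.nth_count hp]
    omega

theorem window (c : ℤ) (Y : YoungDiagram) : ∃ N0 : ℕ, ∀ N : ℕ, N0 ≤ N →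
    (∀ f : ℤ → ℤ, (open Classical in ∑ s ∈ Ico (-(N:ℤ)) N, if s ∈ maya c Y then f s else 0) =
      ∑ i ∈ range (N + c).toNat, f (bead c Y i)) ∧ 0 ≤ N + c ∧ Y.colLen 0 ≤ (N + c).toNat := by
  classical
  refine ⟨c.natAbs + Y.colLen 0 + Y.rowLen 0, fun N hN => ⟨fun f => ?_, by omega, by omega⟩⟩
  rw [← sum_filter]
  symm
  apply sum_nbij (bead c Y)
  · intro i hi
    rw [mem_range] at hi
    have := Y.rowLen_anti 0 i (Nat.zero_le i)
    simp only [mem_filter, mem_Ico]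
    refine ⟨?_, i, rfl⟩
    unfold bead
    omega
  · exact (bead_anti c Y).injective.injOn
  · rintro s hs
    simp only [coe_filter, mem_Ico, Set.mem_ofPred_eq] at hs
    obtain ⟨⟨h1, h2⟩, i, rfl⟩ := hs
    refine ⟨i, ?_, rfl⟩
    simp only [coe_range, Set.mem_Iio]
    by_contra hc
    unfold bead at h1
    rw [rowLen_eq_zero Y i (by omega)] at h1
    omega
  · intros; rfl

theorem sum_bead (c : ℤ) (Y : YoungDiagram) (n : ℕ) (h : Y.colLen 0 ≤ n) :
    ∑ i ∈ range n, (2 * bead c Y i + 1) = 2 * Y.card + 2 * c * n - n ^ 2 := by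
  have h2 : ∑ i ∈ range n, (2 * bead c Y i + 1) =
      2 * ∑ i ∈ range n, (Y.rowLen i : ℤ) + ∑ i ∈ range n, (2 * c - 2 * (i:ℤ) - 1) := by
    rw [mul_sum, ← sum_add_distrib]
    apply sum_congr rfl
    intro i _
    unfold bead
    ring
  have h3 : ∑ i ∈ range n, (2 * c - 2 * (i:ℤ) - 1) = 2 * c * n - n ^ 2 := by
    clear h h2
    induction n with
    | zero => simp
    | succ n ih => rw [sum_range_succ, ih]; push_cast; ring
  rw [h2, h3, card_eq_sum Y n h]
  push_cast
  ring

theorem window2 (c : ℤ) (Y : YoungDiagram) : ∃ N0 : ℕ, ∀ N : ℕ, N0 ≤ N →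
    (open Classical in ∑ s ∈ Ico (-(N:ℤ)) N, if s ∈ maya c Y then (1:ℤ) else 0) = N + c ∧
    (open Classical in ∑ s ∈ Ico (-(N:ℤ)) N, if s ∈ maya c Y then (2 * s + 1:ℤ) else 0) =
      2 * Y.card + c ^ 2 - N ^ 2 := by
  obtain ⟨N0, h⟩ := window c Y
  refine ⟨N0, fun N hN => ?_⟩
  obtain ⟨h1, h2, h3⟩ := h N hN
  constructor
  · rw [h1 (fun _ => 1)]
    simp [h2]
  · rw [h1 (fun s => 2 * s + 1), sum_bead _ _ _ h3, Int.toNat_of_nonneg h2]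
    ring

theorem maya_empty (c : ℤ) : maya c ⊥ = Set.Iio c := by
  have h0 : ∀ i, (⊥ : YoungDiagram).rowLen i = 0 := by
    intro i
    have := (YoungDiagram.mem_iff_lt_rowLen (μ := ⊥) (i := i) (j := 0)).not.1
      (YoungDiagram.notMem_bot _)
    omega
  ext s
  simp only [maya, Set.mem_range, bead, h0, Set.mem_Iio]
  constructor
  · rintro ⟨i, rfl⟩
    push_cast
    omega
  · intro h
    exact ⟨(c - 1 - s).toNat, by push_cast; omega⟩

theorem eq_bot_of_closed (c : ℤ) (Y : YoungDiagram)
    (h : ∀ s ∈ maya c Y, s - 1 ∈ maya c Y) : Y = ⊥ := by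
  have h1 : maya c Y = maya (bead c Y 0 + 1) ⊥ := by
    rw [maya_empty]
    ext s
    simp only [Set.mem_Iio]
    constructor
    · rintro ⟨i, rfl⟩
      have := (bead_anti c Y).antitone (Nat.zero_le i)
      omega
    · intro hs
      have h2 : ∀ k : ℕ, bead c Y 0 - k ∈ maya c Y := by
        intro k
        induction k with
        | zero => exact ⟨0, by simp⟩
        | succ k ih =>
          have := h _ ih
          rw [sub_sub] at this
          exact_mod_cast this
      have := h2 (bead c Y 0 - s).toNat
      have e : bead c Y 0 - ((bead c Y 0 - s).toNat : ℤ) = s := by omega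
      rwa [e] at this
  exact (maya_inj h1).2

theorem exists_col (Y : YoungDiagram) (t : ℤ) (ht : t ∉ maya 0 Y) :
    ∃ j : ℕ, t = j - Y.colLen j := by
  classical
  have hex : ∃ i, bead 0 Y i < t := by
    refine ⟨Y.colLen 0 + t.natAbs, ?_⟩
    unfold bead
    rw [rowLen_eq_zero Y _ (by omega)]
    omega
  let i := Nat.find hex
  have hi : bead 0 Y i < t := Nat.find_spec hex
  have hi' : ∀ k, k < i → ¬ bead 0 Y k < t := fun k hk => Nat.find_min hex hk
  refine ⟨(t + i).toNat, ?_⟩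
  unfold bead at hi
  have h1 := lt_row_iff_lt_col Y i (t + i).toNat
  have h2 : i ≤ Y.colLen (t + i).toNat := by
    rcases Nat.eq_zero_or_pos i with h0 | h0
    · omega
    · have h3 := hi' (i - 1) (by omega)
      have h4 : bead 0 Y (i - 1) ≠ t := fun hh => ht ⟨_, hh⟩
      unfold bead at h3 h4
      have h5 := lt_row_iff_lt_col Y (i - 1) (t + i).toNat
      omega
  omega

theorem isLCore_iff (ℓ : ℕ) (hℓ : 0 < ℓ) (Y : YoungDiagram) :
    IsLCore ℓ Y ↔ ∀ s ∈ maya 0 Y, s - ℓ ∈ maya 0 Y := by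
  constructor
  · rintro h s ⟨i, rfl⟩
    by_contra hc
    obtain ⟨j, hj⟩ := exists_col Y _ hc
    unfold bead at hj
    have h1 := lt_row_iff_lt_col Y i j
    have h2 : j < Y.rowLen i := by omega
    refine h (i, j) (YoungDiagram.mem_iff_lt_rowLen.2 h2) ?_
    unfold hookLength
    simp only
    omega
  · rintro h ⟨i, j⟩ hc hh
    rw [YoungDiagram.mem_cells, YoungDiagram.mem_iff_lt_rowLen] at hc
    have h1 := lt_row_iff_lt_col Y i j
    obtain ⟨k, hk⟩ := h _ ⟨i, rfl⟩
    have h2 := lt_row_iff_lt_col Y k j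
    unfold hookLength at hh
    unfold bead at hk
    simp only at hh
    omega

end LC

namespace LC
open Finset

/-- `(C, Q)` are the runners of the `ℓ`-abacus of `(c, Y)`. -/
def Rel (ℓ : ℕ) (c : ℤ) (Y : YoungDiagram) (C : Fin ℓ → ℤ) (Q : Fin ℓ → YoungDiagram) : Prop :=
  ∀ (j : Fin ℓ) (m : ℤ), m ∈ maya (C j) (Q j) ↔ ℓ * m + (j : ℕ) ∈ maya c Y

theorem divmod (ℓ : ℕ) (hℓ : 0 < ℓ) (s : ℤ) : ∃ (j : Fin ℓ) (m : ℤ), s = ℓ * m + (j : ℕ) := by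
  have h1 := Int.emod_nonneg s (b := (ℓ:ℤ)) (by omega)
  have h2 := Int.emod_lt_of_pos s (b := (ℓ:ℤ)) (by omega)
  have h3 := Int.mul_ediv_add_emod s ℓ
  refine ⟨⟨(s % ℓ).toNat, by omega⟩, s / ℓ, ?_⟩
  simp only [Int.toNat_of_nonneg h1]
  omega

theorem divmod_unique {ℓ : ℕ} {j j' : Fin ℓ} {m m' : ℤ}
    (h : (ℓ:ℤ) * m + (j : ℕ) = ℓ * m' + (j' : ℕ)) : j = j' ∧ m = m' := by
  have hj := j.2
  have hj' := j'.2
  have hm : m = m' := by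
    rcases lt_trichotomy m m' with h1 | h1 | h1
    · nlinarith
    · exact h1
    · nlinarith
  subst hm
  exact ⟨Fin.ext (by omega), rfl⟩

theorem rel_exists (ℓ : ℕ) (hℓ : 0 < ℓ) (c : ℤ) (Y : YoungDiagram) :
    ∃ C Q, Rel ℓ c Y C Q := by
  have h : ∀ j : Fin ℓ, ∃ c' Y', maya c' Y' = {m : ℤ | ℓ * m + (j : ℕ) ∈ maya c Y} := by
    intro j
    apply maya_surj
    obtain ⟨N, h1, h2⟩ := isMaya_maya c Y
    have hj := j.2
    refine ⟨|N| + 1, fun m hm => h1 _ ?_, fun m hm => h2 _ ?_⟩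
    · have := le_abs_self N
      have := abs_nonneg N
      nlinarith
    · have := le_abs_self N
      have := abs_nonneg N
      nlinarith
  choose C Q h using h
  refine ⟨C, Q, fun j m => ?_⟩
  rw [h]
  rfl

theorem rel_exists' (ℓ : ℕ) (hℓ : 0 < ℓ) (C : Fin ℓ → ℤ) (Q : Fin ℓ → YoungDiagram) :
    ∃ c Y, Rel ℓ c Y C Q := by
  choose N h1 h2 using fun j => isMaya_maya (C j) (Q j)
  obtain ⟨c, Y, h⟩ := maya_surj {s | ∃ (j : Fin ℓ) (m : ℤ), s = ℓ * m + (j : ℕ) ∧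
      m ∈ maya (C j) (Q j)} (by
    have hN : ∀ j, |N j| ≤ ∑ j, |N j| := fun j =>
      single_le_sum (f := fun j => |N j|) (fun i _ => abs_nonneg _) (mem_univ j)
    refine ⟨ℓ * (∑ j, |N j| + 1), fun s hs => ?_, ?_⟩
    · obtain ⟨j, m, rfl⟩ := divmod ℓ hℓ s
      refine ⟨j, m, rfl, h1 j _ ?_⟩
      have := hN j
      have := le_abs_self (N j)
      have hj := j.2
      by_contra hc
      nlinarith
    · rintro s hs ⟨j, m, rfl, hm⟩
      refine h2 j _ ?_ hm
      have := hN j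
      have := le_abs_self (N j)
      have hj := j.2
      by_contra hc
      nlinarith)
  refine ⟨c, Y, fun j m => ?_⟩
  rw [h]
  constructor
  · exact fun hm => ⟨j, m, rfl, hm⟩
  · rintro ⟨j', m', h, hm⟩
    obtain ⟨rfl, rfl⟩ := divmod_unique h
    exact hm

theorem rel_unique {ℓ : ℕ} {c : ℤ} {Y : YoungDiagram} {C C' : Fin ℓ → ℤ}
    {Q Q' : Fin ℓ → YoungDiagram} (h : Rel ℓ c Y C Q) (h' : Rel ℓ c Y C' Q') :
    C = C' ∧ Q = Q' := by
  have : ∀ j, C j = C' j ∧ Q j = Q' j := fun j =>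
    maya_inj (Set.ext fun m => (h j m).trans (h' j m).symm)
  exact ⟨funext fun j => (this j).1, funext fun j => (this j).2⟩

theorem rel_unique' {ℓ : ℕ} (hℓ : 0 < ℓ) {c c' : ℤ} {Y Y' : YoungDiagram} {C : Fin ℓ → ℤ}
    {Q : Fin ℓ → YoungDiagram} (h : Rel ℓ c Y C Q) (h' : Rel ℓ c' Y' C Q) :
    c = c' ∧ Y = Y' := by
  apply maya_inj
  ext s
  obtain ⟨j, m, rfl⟩ := divmod ℓ hℓ s
  exact (h j m).symm.trans (h' j m)

theorem sum_window (ℓ : ℕ) (hℓ : 0 < ℓ) (N : ℕ) (g : ℤ → ℤ) :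
    ∑ s ∈ Ico (-((ℓ * N : ℕ):ℤ)) ((ℓ * N : ℕ):ℤ), g s =
      ∑ j : Fin ℓ, ∑ m ∈ Ico (-(N:ℤ)) N, g (ℓ * m + (j : ℕ)) := by
  rw [← sum_product']
  symm
  apply sum_nbij (fun x : Fin ℓ × ℤ => (ℓ:ℤ) * x.2 + (x.1 : ℕ))
  · rintro ⟨j, m⟩ h
    simp only [mem_product, mem_Ico, mem_univ, true_and] at h ⊢
    have hj := j.2
    push_cast
    constructor <;> nlinarith
  · rintro ⟨j, m⟩ _ ⟨j', m'⟩ _ h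
    obtain ⟨rfl, rfl⟩ := divmod_unique h
    rfl
  · rintro s hs
    obtain ⟨j, m, rfl⟩ := divmod ℓ hℓ s
    simp only [coe_Ico, Set.mem_Ico] at hs
    have hj := j.2
    refine ⟨(j, m), ?_, rfl⟩
    push_cast at hs
    simp only [coe_product, coe_univ, coe_Ico, Set.mem_prod, Set.mem_univ, true_and, Set.mem_Ico]
    constructor
    · by_contra hc
      nlinarith
    · by_contra hc
      nlinarith
  · intros; rfl

theorem sum_const (ℓ : ℕ) : ∑ j : Fin ℓ, (2 * ((j : ℕ) : ℤ) + 1 - ℓ) = 0 := by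
  rw [Fin.sum_univ_eq_sum_range (fun j => 2 * (j : ℤ) + 1 - ℓ)]
  have : ∀ n : ℕ, ∑ j ∈ range n, (2 * (j : ℤ) + 1 - ℓ) = n * n - n * ℓ := by
    intro n
    induction n with
    | zero => simp
    | succ n ih => rw [sum_range_succ, ih]; push_cast; ring
  rw [this]
  ring

theorem rel_numeric {ℓ : ℕ} (hℓ : 0 < ℓ) {c : ℤ} {Y : YoungDiagram} {C : Fin ℓ → ℤ}
    {Q : Fin ℓ → YoungDiagram} (h : Rel ℓ c Y C Q) :
    c = ∑ j, C j ∧ 2 * (Y.card : ℤ) + c ^ 2 =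
      ∑ j, (ℓ * (2 * ((Q j).card : ℤ) + C j ^ 2) + (2 * ((j : ℕ) : ℤ) + 1 - ℓ) * C j) := by
  classical
  obtain ⟨N0, h0⟩ := window2 c Y
  choose M hM using fun j => window2 (C j) (Q j)
  let N : ℕ := N0 + ∑ j, M j
  have hN : ∀ j, M j ≤ N := fun j =>
    (single_le_sum (f := M) (fun i _ => Nat.zero_le _) (mem_univ j)).trans (Nat.le_add_left _ _)
  have hN0 : N0 ≤ ℓ * N := (Nat.le_add_right _ _).trans (Nat.le_mul_of_pos_left N hℓ)
  obtain ⟨h1, h2⟩ := h0 _ hN0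
  rw [sum_window ℓ hℓ] at h1 h2
  have e1 : ∀ j : Fin ℓ, (∑ m ∈ Ico (-(N:ℤ)) N, if (ℓ:ℤ) * m + (j : ℕ) ∈ maya c Y then (1:ℤ) else 0) =
      N + C j := by
    intro j
    rw [← (hM j N (hN j)).1]
    exact sum_congr rfl fun m _ => by simp only [h j m]
  have e2 : ∀ j : Fin ℓ, (∑ m ∈ Ico (-(N:ℤ)) N, if (ℓ:ℤ) * m + (j : ℕ) ∈ maya c Y then
      (2 * ((ℓ:ℤ) * m + (j : ℕ)) + 1:ℤ) else 0) =
      (ℓ * (2 * ((Q j).card : ℤ) + C j ^ 2) + (2 * ((j : ℕ) : ℤ) + 1 - ℓ) * C j) -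
        ℓ * N ^ 2 + N * (2 * ((j : ℕ) : ℤ) + 1 - ℓ) := by
    intro j
    have a1 := (hM j N (hN j)).1
    have a2 := (hM j N (hN j)).2
    have : (∑ m ∈ Ico (-(N:ℤ)) N, if (ℓ:ℤ) * m + (j : ℕ) ∈ maya c Y then
      (2 * ((ℓ:ℤ) * m + (j : ℕ)) + 1:ℤ) else 0) =
      ℓ * (∑ s ∈ Ico (-(N:ℤ)) N, if s ∈ maya (C j) (Q j) then (2 * s + 1:ℤ) else 0) +
      (2 * ((j : ℕ) : ℤ) + 1 - ℓ) *
        (∑ s ∈ Ico (-(N:ℤ)) N, if s ∈ maya (C j) (Q j) then (1:ℤ) else 0) := by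
      rw [mul_sum, mul_sum, ← sum_add_distrib]
      refine sum_congr rfl fun m _ => ?_
      simp only [h j m]
      split_ifs <;> ring
    rw [this, a1, a2]
    ring
  simp only [e1] at h1
  simp only [e2] at h2
  rw [sum_add_distrib, sum_sub_distrib, ← mul_sum univ (fun x : Fin ℓ => 2 * ((x : ℕ) : ℤ) + 1 - ℓ),
    sum_const] at h2
  rw [sum_add_distrib] at h1
  simp only [Finset.sum_const, card_univ, Fintype.card_fin, nsmul_eq_mul] at h1 h2
  push_cast at h1 h2
  constructor
  · linarith
  · linarith

theorem rel_core {ℓ : ℕ} (hℓ : 0 < ℓ) {Y : YoungDiagram} {C : Fin ℓ → ℤ}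
    {Q : Fin ℓ → YoungDiagram} (h : Rel ℓ 0 Y C Q) : IsLCore ℓ Y ↔ ∀ j, Q j = ⊥ := by
  rw [isLCore_iff ℓ hℓ]
  have e : ∀ (j : Fin ℓ) (m : ℤ), (ℓ:ℤ) * m + (j : ℕ) - ℓ = ℓ * (m - 1) + (j : ℕ) := by
    intros; ring
  constructor
  · intro hs j
    apply eq_bot_of_closed (C j)
    intro m hm
    rw [h, ← e]
    exact hs _ ((h j m).1 hm)
  · intro hQ s hs
    obtain ⟨j, m, rfl⟩ := divmod ℓ hℓ s
    rw [← h, hQ, maya_empty] at hs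
    rw [e, ← h, hQ, maya_empty]
    simp only [Set.mem_Iio] at hs ⊢
    omega

theorem core_quot (ℓ : ℕ) (hℓ : 0 < ℓ) : ∃ (core : YoungDiagram → YoungDiagram)
    (quot : YoungDiagram → Fin ℓ → YoungDiagram),
    (∀ Y, IsLCore ℓ (core Y)) ∧
    (∀ Y, Y.card = (core Y).card + ℓ * ∑ j, (quot Y j).card) ∧
    (∀ Y Y', core Y = core Y' → quot Y = quot Y' → Y = Y') ∧
    (∀ K Q, IsLCore ℓ K → ∃ Y, core Y = K ∧ quot Y = Q) := by
  choose C Q hR using fun Y => rel_exists ℓ hℓ 0 Y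
  have hC : ∀ Y, ∑ j, C Y j = 0 := fun Y => (rel_numeric hℓ (hR Y)).1.symm
  have hk : ∀ Y, ∃ K, Rel ℓ 0 K (C Y) (fun _ => ⊥) := by
    intro Y
    obtain ⟨c, K, h⟩ := rel_exists' ℓ hℓ (C Y) (fun _ => ⊥)
    have := (rel_numeric hℓ h).1
    rw [hC] at this
    subst this
    exact ⟨K, h⟩
  choose core hcore using hk
  refine ⟨core, Q, fun Y => (rel_core hℓ (hcore Y)).2 fun _ => rfl, ?_, ?_, ?_⟩
  · intro Y
    have h1 := (rel_numeric hℓ (hR Y)).2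
    have h2 := (rel_numeric hℓ (hcore Y)).2
    have h3 : ((⊥ : YoungDiagram).card : ℤ) = 0 := by simp [YoungDiagram.card]
    simp only [h3, mul_add, sum_add_distrib, ← mul_sum] at h1 h2
    zify
    simp only [Finset.sum_const_zero] at h2
    linarith
  · intro Y Y' h1 h2
    have a1 := hcore Y
    have a2 := hcore Y'
    rw [h1] at a1
    have a3 := (rel_unique a1 a2).1
    have a4 := hR Y
    rw [a3, h2] at a4
    exact (rel_unique' hℓ a4 (hR Y')).2
  · intro K P hK
    obtain ⟨c, Y, h⟩ := rel_exists' ℓ hℓ (C K) P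
    have hc := (rel_numeric hℓ h).1
    rw [hC] at hc
    subst hc
    obtain ⟨a1, a2⟩ := rel_unique (hR Y) h
    refine ⟨Y, ?_, a2⟩
    have b1 := hcore Y
    have b2 := hR K
    have b3 : Q K = fun _ => ⊥ := funext ((rel_core hℓ b2).1 hK)
    rw [a1] at b1
    rw [b3] at b2
    exact (rel_unique' hℓ b1 b2).2

/-- The tree of cores. -/
def tree {ℓ : ℕ} (core : YoungDiagram → YoungDiagram)
    (quot : YoungDiagram → Fin ℓ → YoungDiagram) : List (Fin ℓ) → YoungDiagram → YoungDiagram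
  | [], Y => core Y
  | a :: t, Y => tree core quot t (quot Y a)

theorem card_zero {Y : YoungDiagram} (h : Y.card = 0) : Y = ⊥ := by
  apply YoungDiagram.ext
  rw [YoungDiagram.cells_bot]
  exact card_eq_zero.1 h

theorem finsum_list {ℓ : ℕ} (f : List (Fin ℓ) → ℕ) (hf : f.support.Finite) :
    ∑ᶠ t, f t = f [] + ∑ a, ∑ᶠ t, f (a :: t) := by
  have h1 : ∀ a : Fin ℓ, (Function.support fun t => f (a :: t)).Finite := fun a =>
    Set.Finite.preimage (f := fun t => a :: t) (fun x _ y _ h => (List.cons.inj h).2) hf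
  have hg : (Function.support fun x : Fin ℓ × List (Fin ℓ) => f (x.1 :: x.2)).Finite :=
    Set.Finite.preimage (f := fun x : Fin ℓ × List (Fin ℓ) => x.1 :: x.2) (fun x _ y _ h => 
      Prod.ext (List.cons.inj h).1 (List.cons.inj h).2) hf
  have h2 := finsum_curry _ hg
  rw [← finsum_eq_sum_of_fintype]
  simp only at h2
  rw [← h2]
  have h3 : ∑ᶠ x : Fin ℓ × List (Fin ℓ), f (x.1 :: x.2) = 
      ∑ᶠ (t) (_ : t ∈ Set.range (fun x : Fin ℓ × List (Fin ℓ) => x.1 :: x.2)), f t := by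
    rw [finsum_mem_range]
    exact fun x y h => Prod.ext (List.cons.inj h).1 (List.cons.inj h).2
  rw [h3, ← finsum_mem_univ]
  have h4 : (Set.univ : Set (List (Fin ℓ))) = 
      insert [] (Set.range (fun x : Fin ℓ × List (Fin ℓ) => x.1 :: x.2)) := by
    ext t
    rcases t with _ | ⟨a, t⟩
    · simp
    · simp
  rw [h4, finsum_mem_insert' _ (by simp) (hf.subset Set.inter_subset_right)]

theorem tree_all (ℓ : ℕ) (hℓ : 2 ≤ ℓ) : ∃ T : YoungDiagram → List (Fin ℓ) → YoungDiagram,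
    (∀ Y t, IsLCore ℓ (T Y t)) ∧
    (∀ Y, (Function.support fun t => (T Y t).card).Finite ∧
      ∑ᶠ t, ℓ ^ t.length * (T Y t).card = Y.card) ∧
    (∀ Y Y', T Y = T Y' → Y = Y') ∧
    (∀ w : List (Fin ℓ) → YoungDiagram, (∀ t, IsLCore ℓ (w t)) →
      (Function.support fun t => (w t).card).Finite → ∃ Y, T Y = w) := by
  obtain ⟨core, quot, hcore, hcard, hinj, hsurj⟩ := core_quot ℓ (by omega)
  have hq : ∀ Y j, 2 * (quot Y j).card ≤ Y.card := by
    intro Y j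
    have h1 := hcard Y
    have h2 := single_le_sum (f := fun j => (quot Y j).card) (fun i _ => Nat.zero_le _)
      (mem_univ j)
    nlinarith
  have hc : ∀ Y, (core Y).card ≤ Y.card := by
    intro Y
    have h1 := hcard Y
    omega
  have hbot : ∀ t, ∀ Y : YoungDiagram, Y.card = 0 → (tree core quot t Y).card = 0 := by
    intro t
    induction t with
    | nil => intro Y h; have := hc Y; simp only [tree]; omega
    | cons a t ih => intro Y h; have := hq Y a; exact ih _ (by omega)
  have hfin : ∀ n, ∀ Y : YoungDiagram, Y.card ≤ n →
      (Function.support fun t => (tree core quot t Y).card).Finite ∧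
      ∑ᶠ t, ℓ ^ t.length * (tree core quot t Y).card = Y.card := by
    intro n
    induction n with
    | zero =>
      intro Y hY
      have h0 : ∀ t, (tree core quot t Y).card = 0 := fun t => hbot t Y (by omega)
      simp only [h0]
      simp
      omega
    | succ n ih =>
      intro Y hY
      have ih' : ∀ j, _ := fun j => ih (quot Y j) (by have := hq Y j; omega)
      have hf : (Function.support fun t => (tree core quot t Y).card).Finite := by
        refine Set.Finite.subset ((Set.finite_singleton []).union
          (Set.finite_iUnion fun a => ((ih' a).1.image (fun t => a :: t)))) ?_
        rintro (_ | ⟨a, t⟩) ht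
        · exact Or.inl rfl
        · exact Or.inr (Set.mem_iUnion.2 ⟨a, t, ht, rfl⟩)
      refine ⟨hf, ?_⟩
      rw [finsum_list _ (hf.subset fun t ht => by
        simp only [Function.mem_support] at ht ⊢
        exact fun h => ht (by rw [h, mul_zero]))]
      rw [hcard Y, mul_sum]
      simp only [List.length_nil, pow_zero, one_mul, List.length_cons, tree]
      congr 1
      refine sum_congr rfl fun a _ => ?_
      rw [← (ih' a).2, mul_finsum]
      refine finsum_congr fun t => ?_
      rw [pow_succ]
      ring
  refine ⟨fun Y t => tree core quot t Y, ?_, fun Y => hfin _ Y le_rfl, ?_, ?_⟩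
  · intro Y t
    induction t generalizing Y with
    | nil => exact hcore Y
    | cons a t ih => exact ih _
  · have : ∀ n, ∀ Y Y' : YoungDiagram, Y.card + Y'.card ≤ n →
        (∀ t, tree core quot t Y = tree core quot t Y') → Y = Y' := by
      intro n
      induction n with
      | zero =>
        intro Y Y' h _
        rw [card_zero (Y := Y) (by omega), card_zero (Y := Y') (by omega)]
      | succ n ih =>
        intro Y Y' h ht
        refine hinj _ _ (ht []) (funext fun j => ih _ _ ?_ fun t => ht (j :: t))
        have := hq Y j
        have := hq Y' j
        omega
    exact fun Y Y' h => this _ Y Y' le_rfl (fun t => congrFun h t)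
  · have : ∀ n, ∀ w : List (Fin ℓ) → YoungDiagram, (∀ t, IsLCore ℓ (w t)) →
        (∀ t, n ≤ t.length → (w t).card = 0) → ∃ Y, ∀ t, tree core quot t Y = w t := by
      intro n
      induction n with
      | zero =>
        intro w _ h
        refine ⟨⊥, fun t => ?_⟩
        rw [card_zero (h t (Nat.zero_le _)), card_zero (hbot t ⊥ (by simp [YoungDiagram.card]))]
      | succ n ih =>
        intro w hw h
        choose P hP using fun a => ih (fun t => w (a :: t)) (fun t => hw _)
          (fun t ht => h _ (by simpa using ht))
        obtain ⟨Y, h1, h2⟩ := hsurj (w []) P (hw [])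
        refine ⟨Y, ?_⟩
        rintro (_ | ⟨a, t⟩)
        · exact h1
        · change tree core quot t (quot Y a) = _
          rw [h2, hP]
    intro w hw hf
    obtain ⟨b, hb⟩ := (hf.image List.length).bddAbove
    obtain ⟨Y, hY⟩ := this (b + 1) w hw (fun t ht => by
      by_contra hc
      have := hb ⟨t, hc, rfl⟩
      omega)
    exact ⟨Y, funext hY⟩

/-- Indices as words. -/
def word (ℓ : ℕ) : List (Fin ℓ) ≃ ((d : ℕ) × Fin (ℓ ^ d)) :=
  List.equivSigmaTuple.trans (Equiv.sigmaCongrRight fun _ => finFunctionFinEquiv)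

theorem word_fst (ℓ : ℕ) (t : List (Fin ℓ)) : (word ℓ t).1 = t.length := rfl

end LC

namespace LC

theorem sum_prod_index {ℓ e : ℕ} [NeZero e] (w : WIndex ℓ e → YoungDiagram)
    (T : ZMod e → List (Fin ℓ) → YoungDiagram) (hT : ∀ i t, w (i, word ℓ t) = T i t) :
    ((Function.support fun x => (w x).card).Finite ↔
      ∀ i, (Function.support fun t => (T i t).card).Finite) ∧
    ((Function.support fun x => (w x).card).Finite →
      ∑ᶠ x : WIndex ℓ e, ℓ ^ x.2.1 * (w x).card =
        ∑ᶠ i, ∑ᶠ t, ℓ ^ t.length * (T i t).card) := by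
  constructor
  · constructor
    · intro h i
      have := h.preimage (f := fun t : List (Fin ℓ) => ((i, word ℓ t) : WIndex ℓ e))
        (fun x _ y _ hxy => (word ℓ).injective (Prod.ext_iff.1 hxy).2)
      refine this.subset fun t ht => ?_
      simpa [hT] using ht
    · intro h
      refine (Set.finite_iUnion fun i =>
        (h i).image (fun t => ((i, word ℓ t) : WIndex ℓ e))).subset ?_
      rintro ⟨i, x⟩ hx
      obtain ⟨t, rfl⟩ := (word ℓ).surjective x
      refine Set.mem_iUnion.2 ⟨i, t, ?_, rfl⟩
      simpa [hT] using hx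
  · intro h
    rw [finsum_curry _ (h.subset fun t ht => by
        simp only [Function.mem_support] at ht ⊢
        exact fun h => ht (by rw [h, mul_zero]))]
    refine finsum_congr fun i => ?_
    rw [← finsum_comp_equiv (word ℓ)]
    refine finsum_congr fun t => ?_
    simp only [hT, word_fst]

end LC

theorem Wset_equivariant_equiv_Lset (ℓ : ℕ) (hℓ : ℓ.Prime)
    (e r n : ℕ) (he : 0 < e) (hr : 0 < r) (hre : r ∣ e) :
    (∀ (k : ZMod r) (lam : ZMod e → YoungDiagram),
      lam ∈ Lset e n → shiftL e r k lam ∈ Lset e n) ∧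
    (∀ (k : ZMod r) (w : WIndex ℓ e → YoungDiagram),
      w ∈ Wset ℓ e n → shiftW ℓ e r k w ∈ Wset ℓ e n) ∧
    ∃ Φ : Lset e n ≃ Wset ℓ e n,
      ∀ (k : ZMod r) (x y : Lset e n), (y : ZMod e → YoungDiagram) = shiftL e r k x →
        (Φ y : WIndex ℓ e → YoungDiagram) = shiftW ℓ e r k (Φ x) := by
  haveI : NeZero e := ⟨he.ne'⟩
  refine ⟨?_, ?_, ?_⟩
  · intro k lam h
    have := finsum_comp_equiv (Equiv.addRight (embed e r k)) (f := fun i => (lam i).card)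
    exact this.trans h
  · rintro k w ⟨h1, h2, h3⟩
    let E : WIndex ℓ e ≃ WIndex ℓ e :=
      Equiv.prodCongr (Equiv.addRight (embed e r k)) (Equiv.refl _)
    refine ⟨fun x => h1 _, ?_, ?_⟩
    · exact h2.preimage (f := E) E.injective.injOn
    · have := finsum_comp_equiv E (f := fun x => ℓ ^ x.2.1 * (w x).card)
      exact this.trans h3
  · obtain ⟨T, hcore, hcard, hinj, hsurj⟩ := LC.tree_all ℓ hℓ.two_le
    let F : (ZMod e → YoungDiagram) → (WIndex ℓ e → YoungDiagram) :=
      fun lam x => T (lam x.1) ((LC.word ℓ).symm x.2)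
    have hF : ∀ lam i t, F lam (i, LC.word ℓ t) = T (lam i) t := by
      intro lam i t
      simp only [F, Equiv.symm_apply_apply]
    have hfin : ∀ lam, (Function.support fun x => (F lam x).card).Finite := fun lam =>
      (LC.sum_prod_index (F lam) _ (hF lam)).1.2 fun i => (hcard (lam i)).1
    have hsum : ∀ lam, ∑ᶠ x : WIndex ℓ e, ℓ ^ x.2.1 * (F lam x).card =
        ∑ᶠ i, (lam i).card := by
      intro lam
      rw [(LC.sum_prod_index (F lam) _ (hF lam)).2 (hfin lam)]
      exact finsum_congr fun i => (hcard (lam i)).2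
    let G : Lset e n → Wset ℓ e n := fun lam =>
      ⟨F lam, fun x => hcore _ _, hfin _, (hsum _).trans lam.2⟩
    have hG : Function.Bijective G := by
      constructor
      · rintro ⟨lam, h⟩ ⟨lam', h'⟩ hh
        have h1 : F lam = F lam' := congrArg Subtype.val hh
        apply Subtype.ext
        funext i
        apply hinj
        funext t
        rw [← hF, ← hF, h1]
      · rintro ⟨w, h1, h2, h3⟩
        have hs : ∀ i, _ := (LC.sum_prod_index w (fun i t => w (i, LC.word ℓ t))
          (fun _ _ => rfl)).1.1 h2
        choose lam hlam using fun i => hsurj (fun t => w (i, LC.word ℓ t)) (fun t => h1 _) (hs i)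
        have hw : F lam = w := by
          funext ⟨i, x⟩
          obtain ⟨t, rfl⟩ := (LC.word ℓ).surjective x
          rw [hF, hlam]
        refine ⟨⟨lam, ?_⟩, Subtype.ext hw⟩
        change _ = n
        rw [← hsum, hw, h3]
    refine ⟨Equiv.ofBijective G hG, ?_⟩
    intro k x y hxy
    funext z
    change T ((y : ZMod e → YoungDiagram) z.1) _ = T ((x : ZMod e → YoungDiagram) _) _
    rw [hxy]
    rfl
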